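/- Suppose a family of polynomials g_{j,k} ∈ ℂ[∂,λ] (j,k ∈ ℤ) and constants a,α,b,β ∈ ℂ satisfy g_{j,k}(∂+λ,μ)·(∂+αλ+β) − g_{j,i+k}(∂,μ)·(∂+μ+aλ+b) = ((1/2)λ−μ)·g_{i+j,k}(∂,λ+μ) for all i,j,k ∈ ℤ, with all g_{j,k} nonzero, monic in ∂, and of common ∂-degree d ∈ {0,1}. Then β = b, and: if d = 1 then g_{j,k}(∂,λ) = ∂+(2a−1)λ+b and α = a−1/2; if d = 0 then g_{j,k}(∂,λ) = 1 and α = a+1/2. -/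

import Mathlib

open Polynomial

/-- Evaluation of a two-variable polynomial `f ∈ ℂ[λ][∂]` at `∂ = x`, `λ = l`:
the outer variable is `∂`, the coefficients are polynomials in `λ`. -/
noncomputable def ev (f : Polynomial (Polynomial ℂ)) (x l : ℂ) : ℂ :=
  (f.map (Polynomial.evalRingHom l)).eval x

/- For `i = 0` the relation involves a single polynomial `g = g_{j,k}`:
`g(∂+λ,μ)(∂+αλ+β) - g(∂,μ)(∂+μ+aλ+b) = (cλ-μ) g(∂,λ+μ)` with `c = 1/2`. If `g` is monic in `∂` of
degree `d`, the terms in `∂^(d+1)` cancel and the coefficient of `∂^d` gives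
`dλ + αλ + β - μ - aλ - b = cλ - μ`, whence `β = b` and `α = a + c - d`. If `d = 1`, write
`g = ∂ + p(λ)`; at `∂ = μ = 0` the relation reads `λ (c p(λ) - αλ - β - (c-1) p(0)) = 0`, and
cancelling `λ` yields `p(0) = β` and then `c p(λ) = αλ + cβ`. -/

theorem nextCoeff_taylor {R : Type*} [Semiring R] (r : R) (f : R[X]) :
    (taylor r f).nextCoeff = f.nextCoeff + f.natDegree * f.leadingCoeff * r := by
  rcases h : f.natDegree with _ | n
  · simp [nextCoeff, h]
  · have hlin : (hasseDeriv n f).natDegree ≤ 1 := by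
      have := natDegree_hasseDeriv_le f n
      omega
    have hderiv : hasseDeriv n f = C ((n + 1) * f.coeff (n + 1)) * X + C (f.coeff n) := by
      rw [eq_X_add_C_of_natDegree_le_one hlin]
      simp [hasseDeriv_coeff, add_comm 1 n]
    have hcoeff : (taylor r f).coeff n = f.coeff n + (n + 1) * f.coeff (n + 1) * r := by
      rw [taylor_coeff, hderiv, eval_add, eval_C_mul, eval_X, eval_C, add_comm]
    simp [nextCoeff, leadingCoeff, h, hcoeff]

theorem coeff_natDegree_mul_X_add_C {R : Type*} [Semiring R] (f : R[X]) (r : R) :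
    (f * (X + C r)).coeff f.natDegree = f.nextCoeff + f.leadingCoeff * r := by
  rcases h : f.natDegree with _ | n <;> simp [nextCoeff, leadingCoeff, mul_add, h]

theorem ev_eq_evalEval (f : ℂ[X][X]) (x l : ℂ) : ev f x l = f.evalEval l x :=
  map_evalRingHom_eval l x f

/-- The relation `[L_λ G]_{λ+μ} x = (∂ + (c + 1)λ) G_{λ+μ} x` for an operator `G_λ x = g(∂, λ) y`
from a module of type `V_{a,b}` generated by `x` to one of type `V_{α,β}` generated by `y`: it says
that `G` is primary of conformal weight `c + 1`. Since `(∂G)_{λ+μ} = -(λ+μ) G_{λ+μ}`, the factor on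
the right is `cλ - μ`. The outer variable of `g` is `∂`, so `∂` is the second argument of
`evalEval`. -/
def IsPrimaryAction {R : Type*} [CommRing R] (c a b α β : R) (g : R[X][X]) : Prop :=
  ∀ x l m : R,
    g.evalEval m (x + l) * (x + α * l + β) - g.evalEval m x * (x + m + a * l + b)
      = (c * l - m) * g.evalEval (l + m) x

namespace IsPrimaryAction

variable {R : Type*} [CommRing R] [IsDomain R] [Infinite R] {c a b α β : R} {g : R[X][X]}

theorem taylor_map_evalRingHom_mul_sub (hg : IsPrimaryAction c a b α β g) (l m : R) :
    taylor l (g.map (evalRingHom m)) * (X + C (α * l + β))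
        - g.map (evalRingHom m) * (X + C (m + a * l + b))
      = C (c * l - m) * g.map (evalRingHom (l + m)) := by
  refine Polynomial.funext fun x => ?_
  simpa only [eval_sub, eval_mul, eval_add, eval_X, eval_C, taylor_eval, map_evalRingHom_eval,
    add_assoc] using hg x l m

theorem natDegree_mul_add_sub_eq (hg : IsPrimaryAction c a b α β g) (hmonic : g.Monic) (l m : R) :
    g.natDegree * l + (α * l + β) - (m + a * l + b) = c * l - m := by
  set p : R → R[X] := fun t => g.map (evalRingHom t)
  have hpmonic (t : R) : (p t).Monic := hmonic.map _
  have hdeg (t : R) : (p t).natDegree = g.natDegree := hmonic.natDegree_map _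
  have htaylor : (taylor l (p m) * (X + C (α * l + β))).coeff g.natDegree
      = (p m).nextCoeff + g.natDegree * l + (α * l + β) := by
    have := coeff_natDegree_mul_X_add_C (taylor l (p m)) (α * l + β)
    simpa [nextCoeff_taylor, hdeg, (hpmonic m).leadingCoeff] using this
  have hright : (p m * (X + C (m + a * l + b))).coeff g.natDegree
      = (p m).nextCoeff + (m + a * l + b) := by
    rw [← hdeg m, coeff_natDegree_mul_X_add_C, (hpmonic m).leadingCoeff, one_mul]
  have hlead : (p (l + m)).coeff g.natDegree = 1 := hdeg (l + m) ▸ hpmonic (l + m)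
  have h := congrArg (coeff · g.natDegree) (hg.taylor_map_evalRingHom_mul_sub l m)
  simp only [coeff_sub, coeff_C_mul] at h
  linear_combination h - htaylor + hright + (c * l - m) * hlead

theorem eq_of_monic (hg : IsPrimaryAction c a b α β g) (hmonic : g.Monic) : β = b := by
  linear_combination hg.natDegree_mul_add_sub_eq hmonic 0 0

theorem weight_eq_of_monic (hg : IsPrimaryAction c a b α β g) (hmonic : g.Monic) :
    α = a + c - g.natDegree := by
  linear_combination hg.natDegree_mul_add_sub_eq hmonic 1 0 - hg.natDegree_mul_add_sub_eq hmonic 0 0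

theorem C_mul_coeff_zero (hg : IsPrimaryAction c a b α β g) (hmonic : g.Monic)
    (hdeg : g.natDegree = 1) : C c * g.coeff 0 = C α * X + C (c * β) := by
  obtain ⟨p, rfl⟩ : ∃ p, g = X + C p := ⟨_, hmonic.eq_X_add_C hdeg⟩
  have hβ := hg.eq_of_monic hmonic
  have hα := hg.weight_eq_of_monic hmonic
  rw [hdeg, Nat.cast_one] at hα
  have hp : C c * p = C α * X + C (β + (c - 1) * p.eval 0) := by
    refine mul_left_cancel₀ X_ne_zero (Polynomial.funext fun l => ?_)
    have h := hg 0 l 0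
    simp only [evalEval_add, evalEval_X, evalEval_C, zero_add, add_zero] at h
    simp only [eval_mul, eval_add, eval_X, eval_C]
    linear_combination p.eval 0 * (l * hα + hβ) - h
  have hp0 : p.eval 0 = β := by
    have h := congrArg (eval 0) hp
    simp only [eval_mul, eval_add, eval_X, eval_C] at h
    linear_combination h
  simpa [hp0, sub_mul] using hp

end IsPrimaryAction

theorem stmt16_general {R : Type*} [CommRing R] [IsDomain R] [Infinite R] {c a b α β : R}
    {g : R[X][X]} (hg : IsPrimaryAction c a b α β g) (hmonic : g.Monic) :
    β = b ∧ α = a + c - g.natDegree ∧ (g.natDegree = 0 → g = 1) ∧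
      (g.natDegree = 1 →
        ∀ x l : R, c * g.evalEval l x = c * (x + b) + (a + c - 1) * l) := by
  have hβ := hg.eq_of_monic hmonic
  have hα := hg.weight_eq_of_monic hmonic
  refine ⟨hβ, hα, eq_one_of_monic_natDegree_zero hmonic, fun hdeg x l => ?_⟩
  have hp := congrArg (eval l) (hg.C_mul_coeff_zero hmonic hdeg)
  simp only [eval_mul, eval_add, eval_X, eval_C] at hp
  rw [hdeg, Nat.cast_one] at hα
  rw [hmonic.eq_X_add_C hdeg, evalEval_add, evalEval_X, evalEval_C]
  linear_combination hp + l * hα + c * hβ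

/-- suppose `g_{j,k} ∈ ℂ[∂,λ]` (`j,k ∈ ℤ`) and `a,α,b,β ∈ ℂ` satisfy
`g_{j,k}(∂+λ,μ)·(∂+αλ+β) − g_{j,i+k}(∂,μ)·(∂+μ+aλ+b) = ((1/2)λ−μ)·g_{i+j,k}(∂,λ+μ)`
for all `i,j,k ∈ ℤ`, with all `g_{j,k}` nonzero, monic in `∂`, of common `∂`-degree
`d ∈ {0,1}`.  Then `β = b`, and: if `d = 1` then `g_{j,k}(∂,λ) = ∂+(2a−1)λ+b` and
`α = a−1/2`; if `d = 0` then `g_{j,k} = 1` and `α = a+1/2`. -/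
theorem stmt16 (a α b β : ℂ) (d : ℕ) (hd : d = 0 ∨ d = 1)
    (g : ℤ → ℤ → Polynomial (Polynomial ℂ))
    (hmonic : ∀ j k : ℤ, (g j k).Monic)
    (hdeg : ∀ j k : ℤ, (g j k).natDegree = d)
    (h : ∀ (i j k : ℤ) (x l m : ℂ),
      ev (g j k) (x + l) m * (x + α*l + β) - ev (g j (i+k)) x m * (x + m + a*l + b)
        = ((1/2)*l - m) * ev (g (i+j) k) x (l + m)) :
    β = b
    ∧ (d = 1 →
        (∀ (j k : ℤ) (x l : ℂ), ev (g j k) x l = x + (2*a - 1)*l + b) ∧ α = a - 1/2)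
    ∧ (d = 0 → (∀ (j k : ℤ) (x l : ℂ), ev (g j k) x l = 1) ∧ α = a + 1/2) := by
  have hg (j k : ℤ) : IsPrimaryAction (1 / 2) a b α β (g j k) := fun x l m => by
    simpa only [ev_eq_evalEval, zero_add] using h 0 j k x l m
  have key (j k : ℤ) := stmt16_general (hg j k) (hmonic j k)
  simp only [hdeg, ev_eq_evalEval] at key ⊢
  obtain ⟨hβ, hα, -, -⟩ := key 0 0
  refine ⟨hβ, ?_, ?_⟩ <;> rintro rfl
  · refine ⟨fun j k x l => ?_, by linear_combination hα⟩
    linear_combination 2 * (key j k).2.2.2 rfl x l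
  · refine ⟨fun j k x l => ?_, by linear_combination hα⟩
    rw [(key j k).2.2.1 rfl, evalEval_one]
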